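/- arXiv:math/0508171 — 3 statements merged into one kernel-verified Lean document; each statement's English description precedes it below -/
import Mathlib

section
/- For every k = 0, 1, 2, …, the forest matrices of Γ satisfy the recurrence Q_{k+1} = σ_{k+1} I − L Q_k, where σ_{k+1} = tr(L Q_k)/(k+1); consequently Q_{k+1} = (tr(L Q_k)/(k+1)) I − L Q_k. -/
/-!
The `(i, j)` entry of `L Q_k` is `∑ₘ w_mi Q_k(i, j) - ∑ₘ w_im Q_k(m, j)`. The first sum runs over
pairs `(m, F)` where `F` is a `k`-arc forest having `j` in the tree of its root `i`; the second one
over pairs where `F` has `j` in the tree of its root `m`. Adding the arc `(m, i)`, respectively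
`(i, m)`, to `F` turns either sum into a sum of weights of `(k+1)`-arc digraphs of indegree at most
one, each obtained only once (`first_injective`, `second_injective`).

* A digraph with a cycle is obtained in the first way iff it is obtained in the second way: the
  cycle passes through `i`, and one removes its arc entering `i` or its arc leaving `i`
  (`second_of_first`, `first_of_second`). These contributions cancel.
* A forest `A` is obtained in the first way iff `i` is not a root of `A` and `i` reaches `j`
  (`first_iff_of_forest`), and in the second way iff `i` reaches `j` by a nonempty path
  (`second_iff_of_forest`). The difference of the two indicators is `δ_ij - [j` is in the tree of
  the root `i]`, which sums to `σ_{k+1} δ_ij - Q_{k+1}(i, j)`.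

The formula for `σ_{k+1}` follows by taking traces: a forest with `k + 1` arcs has `n - (k + 1)`
roots, so `tr Q_{k+1} = (n - (k + 1)) σ_{k+1}`.

Positivity of the arcs of a forest can be ignored throughout, because a digraph with an arc of
weight zero has weight zero.
-/


open Matrix Finset

namespace ForestMatrix

variable {n : ℕ}

/-- Reachability from `i` to `j` within a finite set `F` of arcs. -/
def FReach (F : Finset (Fin n × Fin n)) (i j : Fin n) : Prop :=
  Relation.ReflTransGen (fun a b => (a, b) ∈ F) i j

/-- `F` is (the arc set of) a spanning diverging forest (out-forest) of the digraph whose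
positive arc weights are recorded in `W`: all arcs of `F` are arcs of the digraph, every
vertex has indegree at most one, and there are no directed cycles. -/
def IsOutForest (W : Matrix (Fin n) (Fin n) ℝ) (F : Finset (Fin n × Fin n)) : Prop :=
  (∀ e ∈ F, 0 < W e.1 e.2) ∧
  (∀ v : Fin n, ({e ∈ F | e.2 = v} : Finset (Fin n × Fin n)).card ≤ 1) ∧
  (∀ v : Fin n, ¬ Relation.TransGen (fun a b => (a, b) ∈ F) v v)

/-- The weight of a (sub)digraph: the product of its arc weights. -/
noncomputable def wt (W : Matrix (Fin n) (Fin n) ℝ) (F : Finset (Fin n × Fin n)) : ℝ :=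
  ∏ e ∈ F, W e.1 e.2

/-- The weight of a set of digraphs: the sum of their weights. -/
noncomputable def wtSet (W : Matrix (Fin n) (Fin n) ℝ)
    (G : Finset (Finset (Fin n × Fin n))) : ℝ :=
  ∑ F ∈ G, wt W F

open scoped Classical in
/-- The set of all out-forests of the digraph with weight matrix `W`. -/
noncomputable def allOutForests (W : Matrix (Fin n) (Fin n) ℝ) :
    Finset (Finset (Fin n × Fin n)) :=
  Finset.univ.filter (fun F => IsOutForest W F)

open scoped Classical in
/-- The set of all out-forests with `k` arcs. -/
noncomputable def outForests (W : Matrix (Fin n) (Fin n) ℝ) (k : ℕ) :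
    Finset (Finset (Fin n × Fin n)) :=
  Finset.univ.filter (fun F => IsOutForest W F ∧ F.card = k)

/-- The number of arcs of a maximum out-forest; it equals `n - d'` where `d'` is the
out-forest dimension. -/
noncomputable def maxArcs (W : Matrix (Fin n) (Fin n) ℝ) : ℕ :=
  (allOutForests W).sup Finset.card

/-- `σ_k`: the total weight of the out-forests with `k` arcs. -/
noncomputable def sigma (W : Matrix (Fin n) (Fin n) ℝ) (k : ℕ) : ℝ :=
  wtSet W (outForests W k)

/-- `j` belongs to the tree of the forest `F` diverging from `i`:
`i` is a root of `F` and `j` is reachable from `i` in `F`. -/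
def inTreeOf (F : Finset (Fin n × Fin n)) (i j : Fin n) : Prop :=
  (∀ e ∈ F, e.2 ≠ i) ∧ FReach F i j

open scoped Classical in
/-- `Q_k`: the matrix of out-forests with `k` arcs; its `(i,j)` entry is the total weight of
the out-forests with `k` arcs in which `j` belongs to a tree diverging from `i`. -/
noncomputable def Qmat (W : Matrix (Fin n) (Fin n) ℝ) (k : ℕ) :
    Matrix (Fin n) (Fin n) ℝ :=
  fun i j => wtSet W ((outForests W k).filter (fun F => inTreeOf F i j))

/-- The column Laplacian matrix of the digraph with weight matrix `W`. -/
noncomputable def Lap (W : Matrix (Fin n) (Fin n) ℝ) : Matrix (Fin n) (Fin n) ℝ :=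
  fun i j => if i = j then ∑ k ∈ Finset.univ.erase i, W k i else -W i j

/-- `σ(τ) = Σ_{k=0}^{n-d'} σ_k τ^k`. -/
noncomputable def sigmaTau (W : Matrix (Fin n) (Fin n) ℝ) (τ : ℝ) : ℝ :=
  ∑ k ∈ Finset.range (maxArcs W + 1), sigma W k * τ ^ k

/-- `Q(τ) = Σ_{k=0}^{n-d'} Q_k τ^k`. -/
noncomputable def QTau (W : Matrix (Fin n) (Fin n) ℝ) (τ : ℝ) :
    Matrix (Fin n) (Fin n) ℝ :=
  ∑ k ∈ Finset.range (maxArcs W + 1), τ ^ k • Qmat W k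

/-- `J(τ) = σ(τ)⁻¹ Q(τ)`. -/
noncomputable def JTau (W : Matrix (Fin n) (Fin n) ℝ) (τ : ℝ) :
    Matrix (Fin n) (Fin n) ℝ :=
  (sigmaTau W τ)⁻¹ • QTau W τ

/-- `J̃ = σ_{n-d'}⁻¹ Q_{n-d'}`: the normalized matrix of maximum out-forests. -/
noncomputable def Jtil (W : Matrix (Fin n) (Fin n) ℝ) : Matrix (Fin n) (Fin n) ℝ :=
  (sigma W (maxArcs W))⁻¹ • Qmat W (maxArcs W)

/-- Reachability in the digraph with weight matrix `W`. -/
def Reach (W : Matrix (Fin n) (Fin n) ℝ) (i j : Fin n) : Prop :=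
  Relation.ReflTransGen (fun a b => 0 < W a b) i j

/-- `K` is a source knot of the digraph: `K` is the vertex set of a bicomponent
(a maximal strongly connected subgraph) and no arc enters `K` from outside. -/
def IsSourceKnot (W : Matrix (Fin n) (Fin n) ℝ) (K : Finset (Fin n)) : Prop :=
  (∃ i, ∀ j, j ∈ K ↔ (Reach W i j ∧ Reach W j i)) ∧
  (∀ j k, k ∈ K → 0 < W j k → j ∈ K)

/-! ### Forests as arc sets -/

/-- Every vertex has indegree at most one in `F`. -/
def InDegLeOne (F : Finset (Fin n × Fin n)) : Prop :=
  ∀ a b v, (a, v) ∈ F → (b, v) ∈ F → a = b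

/-- `F` has no directed cycle (loops included). -/
def Acyclic (F : Finset (Fin n × Fin n)) : Prop :=
  ∀ v, ¬ Relation.TransGen (fun a b => (a, b) ∈ F) v v

/-- `F` is a diverging forest of the complete digraph: `IsOutForest` without the requirement
that the arcs have positive weight. -/
def IsForest (F : Finset (Fin n × Fin n)) : Prop :=
  InDegLeOne F ∧ Acyclic F

theorem freach_mono {F G : Finset (Fin n × Fin n)} (h : F ⊆ G) {x y : Fin n}
    (hr : FReach F x y) : FReach G x y :=
  Relation.ReflTransGen.mono (fun _ _ hab => h hab) _ _ hr

theorem freach_insert {F : Finset (Fin n × Fin n)} {a b x y : Fin n} :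
    FReach (insert (a, b) F) x y ↔ FReach F x y ∨ (FReach F x a ∧ FReach F b y) := by
  constructor
  · intro h
    induction h with
    | refl => exact Or.inl .refl
    | tail _ hs ih =>
      rw [Finset.mem_insert, Prod.mk.injEq] at hs
      rcases hs with ⟨rfl, rfl⟩ | hs
      · rcases ih with ih | ⟨ih, _⟩
        · exact Or.inr ⟨ih, .refl⟩
        · exact Or.inr ⟨ih, .refl⟩
      · rcases ih with ih | ⟨ih, ih'⟩
        · exact Or.inl (ih.tail hs)
        · exact Or.inr ⟨ih, ih'.tail hs⟩
  · have hs : F ⊆ insert (a, b) F := Finset.subset_insert _ _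
    rintro (h | ⟨h, h'⟩)
    · exact freach_mono hs h
    · exact Relation.ReflTransGen.trans (freach_mono hs h)
        (Relation.ReflTransGen.head (Finset.mem_insert_self _ _) (freach_mono hs h'))

theorem acyclic_iff {F : Finset (Fin n × Fin n)} :
    Acyclic F ↔ ∀ a b, (a, b) ∈ F → ¬ FReach F b a := by
  constructor
  · intro h a b hab hba
    exact h a (Relation.TransGen.head' hab hba)
  · intro h v hv
    obtain ⟨c, h1, h2⟩ := Relation.TransGen.head'_iff.1 hv
    exact h v c h1 h2

theorem Acyclic.mono {F G : Finset (Fin n × Fin n)} (h : F ⊆ G) (hG : Acyclic G) : Acyclic F :=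
  acyclic_iff.2 fun a b hab hr => acyclic_iff.1 hG a b (h hab) (freach_mono h hr)

theorem IsForest.mono {F G : Finset (Fin n × Fin n)} (h : F ⊆ G) (hG : IsForest G) :
    IsForest F :=
  ⟨fun a b v ha hb => hG.1 a b v (h ha) (h hb), hG.2.mono h⟩

theorem acyclic_insert {F : Finset (Fin n × Fin n)} {a b : Fin n} (hF : Acyclic F) :
    Acyclic (insert (a, b) F) ↔ ¬ FReach F b a := by
  constructor
  · intro h hr
    exact acyclic_iff.1 h a b (Finset.mem_insert_self _ _)
      (freach_mono (Finset.subset_insert _ _) hr)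
  · intro h
    rw [acyclic_iff]
    intro c d hcd hr
    rw [freach_insert] at hr
    rw [Finset.mem_insert, Prod.mk.injEq] at hcd
    rcases hcd with ⟨rfl, rfl⟩ | hcd
    · rcases hr with hr | ⟨hr, _⟩ <;> exact h hr
    · rcases hr with hr | ⟨hr, hr'⟩
      · exact acyclic_iff.1 hF c d hcd hr
      · exact h (Relation.ReflTransGen.trans (Relation.ReflTransGen.tail hr' hcd) hr)

/-- Adding an arc that enters a root `b` keeps all indegrees at most one. -/
theorem inDegLeOne_insert {F : Finset (Fin n × Fin n)} {a b : Fin n} (hF : InDegLeOne F)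
    (hb : ∀ e ∈ F, e.2 ≠ b) : InDegLeOne (insert (a, b) F) := by
  intro x y v hx hy
  simp only [Finset.mem_insert, Prod.mk.injEq] at hx hy
  rcases hx with ⟨rfl, rfl⟩ | hx
  · rcases hy with ⟨rfl, _⟩ | hy
    · rfl
    · exact absurd rfl (hb _ hy)
  · rcases hy with ⟨rfl, rfl⟩ | hy
    · exact absurd rfl (hb _ hx)
    · exact hF x y v hx hy

theorem eq_of_freach_root {F : Finset (Fin n × Fin n)} {x r : Fin n} (hr : ∀ e ∈ F, e.2 ≠ r)
    (h : FReach F x r) : x = r := by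
  rcases Relation.ReflTransGen.cases_tail h with h | ⟨c, _, hc⟩
  · exact h.symm
  · exact absurd rfl (hr _ hc)

/-- Backward paths are unique when indegrees are at most one, so a vertex lies in the tree of at
most one root. -/
theorem root_unique {F : Finset (Fin n × Fin n)} (hF : InDegLeOne F) {r s j : Fin n}
    (hr : inTreeOf F r j) (hs : inTreeOf F s j) : r = s := by
  obtain ⟨hr, hrj⟩ := hr
  obtain ⟨hs, hsj⟩ := hs
  have key : FReach F r s ∨ FReach F s r := by
    clear hr hs
    induction hrj with
    | refl => exact Or.inr hsj
    | tail h1 h2 ih =>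
      rcases Relation.ReflTransGen.cases_tail hsj with h | ⟨c, hc, hc'⟩
      · subst h
        exact Or.inl (Relation.ReflTransGen.tail h1 h2)
      · have := hF _ _ _ hc' h2
        subst this
        exact ih hc
  rcases key with h | h
  · exact eq_of_freach_root hs h
  · exact (eq_of_freach_root hr h).symm

/-- After deletion of its only entering arc, a vertex is a root. -/
theorem root_erase {F : Finset (Fin n × Fin n)} (hF : InDegLeOne F) {a b : Fin n}
    (hab : (a, b) ∈ F) : ∀ e ∈ F.erase (a, b), e.2 ≠ b := by
  rintro ⟨x, y⟩ he rfl
  rw [Finset.mem_erase] at he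
  exact he.1 (by rw [hF _ _ _ he.2 hab])

/-! ### Digraphs obtained from a forest by adding an arc at `i` -/

/-- `A` arises from a forest `F` in which `j` is in the tree of the root `i` by adding the arc
`(m, i)`. -/
def First (i j : Fin n) (k : ℕ) (A : Finset (Fin n × Fin n)) (m : Fin n)
    (F : Finset (Fin n × Fin n)) : Prop :=
  (IsForest F ∧ F.card = k ∧ inTreeOf F i j) ∧ insert (m, i) F = A

/-- `A` arises from a forest `F` in which `j` is in the tree of the root `m` by adding the arc
`(i, m)`. -/
def Second (i j : Fin n) (k : ℕ) (A : Finset (Fin n × Fin n)) (m : Fin n)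
    (F : Finset (Fin n × Fin n)) : Prop :=
  (IsForest F ∧ F.card = k ∧ inTreeOf F m j) ∧ insert (i, m) F = A

theorem card_insert_root {F : Finset (Fin n × Fin n)} {a b : Fin n}
    (hb : ∀ e ∈ F, e.2 ≠ b) : (insert (a, b) F).card = F.card + 1 :=
  Finset.card_insert_of_notMem fun h => hb _ h rfl

theorem first_injective {i j : Fin n} {k : ℕ} {A F F' : Finset (Fin n × Fin n)} {m m' : Fin n}
    (h : First i j k A m F) (h' : First i j k A m' F') : m = m' ∧ F = F' := by
  obtain ⟨⟨hF, _, hr, _⟩, rfl⟩ := h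
  obtain ⟨⟨hF', _, hr', _⟩, he⟩ := h'
  have hm : m' = m := by
    have : (m', i) ∈ insert (m, i) F := he ▸ Finset.mem_insert_self _ _
    rw [Finset.mem_insert, Prod.mk.injEq] at this
    rcases this with h | h
    · exact h.1
    · exact absurd rfl (hr _ h)
  subst hm
  refine ⟨rfl, ?_⟩
  rw [← Finset.erase_insert (fun h => hr (m', i) h rfl), ← he,
    Finset.erase_insert (fun h => hr' (m', i) h rfl)]

/-- If two different arcs `(i, m)`, `(i, m')` could be the added one, then in the forest with
neither arc both `m` and `m'` would be roots reaching `j`. -/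
theorem second_injective {i j : Fin n} {k : ℕ} {A F F' : Finset (Fin n × Fin n)} {m m' : Fin n}
    (h : Second i j k A m F) (h' : Second i j k A m' F') : m = m' ∧ F = F' := by
  obtain ⟨⟨hF, _, hr, hj⟩, rfl⟩ := h
  obtain ⟨⟨hF', _, hr', hj'⟩, he⟩ := h'
  have hn : (i, m) ∉ F := fun h => hr _ h rfl
  have hn' : (i, m') ∉ F' := fun h => hr' _ h rfl
  have hm : m = m' := by
    by_contra hne
    have h1 : (i, m') ∈ F := by
      have : (i, m') ∈ insert (i, m) F := he ▸ Finset.mem_insert_self _ _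
      grind
    have e1 : insert (i, m') (F.erase (i, m')) = F := Finset.insert_erase h1
    have e2 : insert (i, m) (F.erase (i, m')) = F' := by
      rw [← Finset.erase_insert hn', he]
      grind
    have hF0 : IsForest (F.erase (i, m')) := hF.mono (Finset.erase_subset _ _)
    have c1 : ¬ FReach (F.erase (i, m')) m i := by
      rw [← acyclic_insert hF0.2, e2]; exact hF'.2
    have c2 : ¬ FReach (F.erase (i, m')) m' i := by
      rw [← acyclic_insert hF0.2, e1]; exact hF.2
    rw [← e1, freach_insert] at hj
    rw [← e2, freach_insert] at hj'
    refine hne (root_unique hF0.1 (j := j)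
      ⟨fun e he => hr e (Finset.mem_of_mem_erase he), ?_⟩
      ⟨root_erase hF.1 h1, ?_⟩)
    · exact hj.resolve_right fun h => c1 h.1
    · exact hj'.resolve_right fun h => c2 h.1
  subst hm
  refine ⟨rfl, ?_⟩
  rw [← Finset.erase_insert hn, ← he, Finset.erase_insert hn']

/-- On the cycle created by the arc `(m, i)`, let `(i, c)` be the arc leaving `i`; deleting it
instead of `(m, i)` gives a forest in which `c` is a root. -/
theorem second_of_first {i j : Fin n} {k : ℕ} {A F : Finset (Fin n × Fin n)} {m : Fin n}
    (hA : ¬ IsForest A) (h : First i j k A m F) : ∃ c G, Second i j k A c G := by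
  obtain ⟨⟨hF, hk, hr, hj⟩, rfl⟩ := h
  have hd := inDegLeOne_insert (a := m) hF.1 hr
  have him : FReach F i m := by
    by_contra hc
    exact hA ⟨hd, (acyclic_insert hF.2).2 hc⟩
  rcases Relation.ReflTransGen.cases_head him with rfl | ⟨c, hic, hcm⟩
  · exact ⟨i, F, ⟨hF, hk, hr, hj⟩, rfl⟩
  have hci : c ≠ i := hr _ hic
  have e1 : insert (i, c) (F.erase (i, c)) = F := Finset.insert_erase hic
  have hF0 : IsForest (F.erase (i, c)) := hF.mono (Finset.erase_subset _ _)
  have hr0 : ∀ e ∈ F.erase (i, c), e.2 ≠ i := fun e he => hr e (Finset.mem_of_mem_erase he)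
  have hc0 := root_erase hF.1 hic
  have hcm0 : FReach (F.erase (i, c)) c m := by
    change FReach F c m at hcm
    rw [← e1, freach_insert] at hcm
    rcases hcm with h | h
    · exact h
    · exact absurd (eq_of_freach_root hr0 h.1) hci
  have hG : IsForest (insert (m, i) (F.erase (i, c))) := by
    refine ⟨inDegLeOne_insert hF0.1 hr0, (acyclic_insert hF0.2).2 fun h => ?_⟩
    exact hci (root_unique hF0.1 ⟨hc0, hcm0⟩ ⟨hr0, h⟩)
  refine ⟨c, insert (m, i) (F.erase (i, c)), ⟨hG, ?_, ?_, ?_⟩, ?_⟩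
  · rw [card_insert_root hr0, Finset.card_erase_add_one hic, hk]
  · intro e he
    rcases Finset.mem_insert.1 he with rfl | he
    · exact hci.symm
    · exact hc0 e he
  · rw [freach_insert]
    rw [← e1, freach_insert] at hj
    rcases hj with h | h
    · exact Or.inr ⟨hcm0, h⟩
    · exact Or.inl h.2
  · rw [Finset.insert_comm, e1]

/-- On the cycle created by the arc `(i, c)`, let `(m, i)` be the arc entering `i`; deleting it
instead of `(i, c)` gives a forest in which `i` is a root. -/
theorem first_of_second {i j : Fin n} {k : ℕ} {A F : Finset (Fin n × Fin n)} {c : Fin n}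
    (hA : ¬ IsForest A) (h : Second i j k A c F) : ∃ m G, First i j k A m G := by
  obtain ⟨⟨hF, hk, hr, hj⟩, rfl⟩ := h
  have hd := inDegLeOne_insert (a := i) hF.1 hr
  have hci : FReach F c i := by
    by_contra hc
    exact hA ⟨hd, (acyclic_insert hF.2).2 hc⟩
  rcases Relation.ReflTransGen.cases_tail hci with rfl | ⟨m, _, hmi⟩
  · exact ⟨i, F, ⟨hF, hk, hr, hj⟩, rfl⟩
  have hne : i ≠ c := hr _ hmi
  have e1 : insert (m, i) (F.erase (m, i)) = F := Finset.insert_erase hmi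
  have hF0 : IsForest (F.erase (m, i)) := hF.mono (Finset.erase_subset _ _)
  have hi0 := root_erase hF.1 hmi
  have hr0 : ∀ e ∈ F.erase (m, i), e.2 ≠ c := fun e he => hr e (Finset.mem_of_mem_erase he)
  have hG : IsForest (insert (i, c) (F.erase (m, i))) := by
    refine ⟨inDegLeOne_insert hF0.1 hr0, (acyclic_insert hF0.2).2 fun h => ?_⟩
    exact hne (eq_of_freach_root hi0 h).symm
  refine ⟨m, insert (i, c) (F.erase (m, i)), ⟨hG, ?_, ?_, ?_⟩, ?_⟩
  · rw [card_insert_root hr0, Finset.card_erase_add_one hmi, hk]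
  · intro e he
    rcases Finset.mem_insert.1 he with rfl | he
    · exact hne.symm
    · exact hi0 e he
  · rw [freach_insert]
    rw [← e1, freach_insert] at hj
    rcases hj with h | h
    · exact Or.inr ⟨.refl, h⟩
    · exact Or.inl h.2
  · rw [Finset.insert_comm, e1]

theorem first_iff_of_forest {i j : Fin n} {k : ℕ} {A : Finset (Fin n × Fin n)}
    (hA : IsForest A) (hk : A.card = k + 1) :
    (∃ m F, First i j k A m F) ↔ ¬ (∀ e ∈ A, e.2 ≠ i) ∧ FReach A i j := by
  constructor
  · rintro ⟨m, F, ⟨_, _, _, hj⟩, rfl⟩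
    exact ⟨fun h => h _ (Finset.mem_insert_self _ _) rfl,
      freach_mono (Finset.subset_insert _ _) hj⟩
  · rintro ⟨h, hj⟩
    push Not at h
    obtain ⟨⟨m, i'⟩, hm, rfl⟩ := h
    have e1 := Finset.insert_erase hm
    refine ⟨m, A.erase (m, i'), ⟨hA.mono (Finset.erase_subset _ _), ?_, root_erase hA.1 hm, ?_⟩,
      e1⟩
    · rw [Finset.card_erase_of_mem hm, hk]; rfl
    · rw [← e1, freach_insert] at hj
      exact hj.elim id And.right

theorem second_iff_of_forest {i j : Fin n} {k : ℕ} {A : Finset (Fin n × Fin n)}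
    (hA : IsForest A) (hk : A.card = k + 1) :
    (∃ m F, Second i j k A m F) ↔ i ≠ j ∧ FReach A i j := by
  constructor
  · rintro ⟨m, F, ⟨_, _, _, hj⟩, rfl⟩
    have hr := freach_mono (Finset.subset_insert (i, m) F) hj
    refine ⟨?_, Relation.ReflTransGen.head (Finset.mem_insert_self _ _) hr⟩
    rintro rfl
    exact acyclic_iff.1 hA.2 _ _ (Finset.mem_insert_self _ _) hr
  · rintro ⟨hne, hj⟩
    rcases Relation.ReflTransGen.cases_head hj with h | ⟨m, hm, hmj⟩
    · exact absurd h hne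
    have e1 := Finset.insert_erase hm
    refine ⟨m, A.erase (i, m), ⟨hA.mono (Finset.erase_subset _ _), ?_, root_erase hA.1 hm, ?_⟩,
      e1⟩
    · rw [Finset.card_erase_of_mem hm, hk]; rfl
    · change FReach A m j at hmj
      rw [← e1, freach_insert] at hmj
      exact hmj.elim id And.right

theorem First.card {i j : Fin n} {k : ℕ} {A F : Finset (Fin n × Fin n)} {m : Fin n}
    (h : First i j k A m F) : A.card = k + 1 := by
  obtain ⟨⟨_, hk, hr, _⟩, rfl⟩ := h
  rw [card_insert_root hr, hk]

theorem Second.card {i j : Fin n} {k : ℕ} {A F : Finset (Fin n × Fin n)} {m : Fin n}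
    (h : Second i j k A m F) : A.card = k + 1 := by
  obtain ⟨⟨_, hk, hr, _⟩, rfl⟩ := h
  rw [card_insert_root hr, hk]

/-! ### Weights -/

theorem isOutForest_iff {W : Matrix (Fin n) (Fin n) ℝ} {F : Finset (Fin n × Fin n)} :
    IsOutForest W F ↔ (∀ e ∈ F, 0 < W e.1 e.2) ∧ IsForest F := by
  unfold IsOutForest IsForest
  refine and_congr_right fun _ => and_congr_left fun _ => ?_
  constructor
  · intro h a b v ha hb
    have := Finset.card_le_one.1 (h v) (a, v) (by simp [ha]) (b, v) (by simp [hb])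
    exact (Prod.mk.injEq _ _ _ _ ▸ this).1
  · intro h v
    rw [Finset.card_le_one]
    rintro ⟨a, v1⟩ h1 ⟨b, v2⟩ h2
    simp only [Finset.mem_filter] at h1 h2
    obtain ⟨h1, rfl⟩ := h1
    obtain ⟨h2, rfl⟩ := h2
    rw [h _ _ _ h1 h2]

theorem isOutForest_iff_of_wt_ne_zero {W : Matrix (Fin n) (Fin n) ℝ} (hW0 : ∀ i j, 0 ≤ W i j)
    {F : Finset (Fin n × Fin n)} (h : wt W F ≠ 0) : IsOutForest W F ↔ IsForest F := by
  rw [isOutForest_iff, and_iff_right_iff_imp]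
  intro _ e he
  exact lt_of_le_of_ne (hW0 _ _) (Ne.symm (Finset.prod_ne_zero_iff.1 h e he))

open scoped Classical in
theorem sigma_eq {W : Matrix (Fin n) (Fin n) ℝ} (hW0 : ∀ i j, 0 ≤ W i j) (k : ℕ) :
    sigma W k = ∑ F, if IsForest F ∧ F.card = k then wt W F else 0 := by
  unfold sigma wtSet outForests
  rw [Finset.sum_filter]
  refine Finset.sum_congr rfl fun F _ => ?_
  by_cases h : wt W F = 0
  · simp [h]
  · simp only [isOutForest_iff_of_wt_ne_zero hW0 h]

open scoped Classical in
theorem Qmat_eq {W : Matrix (Fin n) (Fin n) ℝ} (hW0 : ∀ i j, 0 ≤ W i j) (k : ℕ) (i j : Fin n) :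
    Qmat W k i j =
      ∑ F, if IsForest F ∧ F.card = k ∧ inTreeOf F i j then wt W F else 0 := by
  unfold Qmat wtSet outForests
  rw [Finset.filter_filter, Finset.sum_filter]
  refine Finset.sum_congr rfl fun F _ => ?_
  by_cases h : wt W F = 0
  · simp [h]
  · simp only [isOutForest_iff_of_wt_ne_zero hW0 h, and_assoc]

/-- If the digraphs satisfying `S` are those of the form `F + a m` with `P m F`, and each of them
arises from only one pair `(m, F)`, then summation over these pairs amounts to summation over the
digraphs satisfying `S`. -/
theorem sum_add_arc {W : Matrix (Fin n) (Fin n) ℝ} (a : Fin n → Fin n × Fin n) (w : Fin n → ℝ)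
    (hw : ∀ m, w m = W (a m).1 (a m).2)
    (P : Fin n → Finset (Fin n × Fin n) → Prop) [∀ m F, Decidable (P m F)]
    (S : Finset (Fin n × Fin n) → Prop) [DecidablePred S]
    (hS : ∀ A, S A ↔ ∃ m F, P m F ∧ insert (a m) F = A)
    (hP : ∀ m F, P m F → a m ∉ F)
    (hinj : ∀ A m F m' F', P m F ∧ insert (a m) F = A → P m' F' ∧ insert (a m') F' = A →
      m = m' ∧ F = F') :
    ∑ m, w m * ∑ F, (if P m F then wt W F else 0) = ∑ A, if S A then wt W A else 0 := by
  let T : Finset (Fin n × Finset (Fin n × Fin n)) := Finset.univ.filter fun p => P p.1 p.2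
  have hT : (Finset.univ.filter S) = T.image fun p => insert (a p.1) p.2 := by
    ext A
    simp [T, hS]
  rw [← Finset.sum_filter, hT, Finset.sum_image]
  · rw [Finset.sum_filter, Fintype.sum_prod_type]
    refine Finset.sum_congr rfl fun m _ => ?_
    rw [Finset.mul_sum]
    refine Finset.sum_congr rfl fun F _ => ?_
    split_ifs with h
    · rw [wt, wt, Finset.prod_insert (hP m F h), hw]
    · simp
  · rintro ⟨m, F⟩ h ⟨m', F'⟩ h' he
    have h1 : P m F := by simpa [T] using h
    have h2 : P m' F' := by simpa [T] using h'
    obtain ⟨e1, e2⟩ := hinj _ m F m' F' ⟨h1, rfl⟩ ⟨h2, he.symm⟩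
    rw [e1, e2]

theorem Lap_mul_apply {W : Matrix (Fin n) (Fin n) ℝ} (hWd : ∀ i, W i i = 0)
    (M : Matrix (Fin n) (Fin n) ℝ) (i j : Fin n) :
    (Lap W * M) i j = ∑ m, W m i * M i j - ∑ m, W i m * M m j := by
  have h : ∀ m, Lap W i m * M m j =
      (if i = m then (∑ l, W l i) * M i j else 0) - W i m * M m j := by
    intro m
    unfold Lap
    split_ifs with h
    · subst h
      rw [← Finset.add_sum_erase _ _ (Finset.mem_univ i), hWd]
      ring
    · ring
  rw [Matrix.mul_apply, Finset.sum_congr rfl fun m _ => h m, Finset.sum_sub_distrib,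
    Finset.sum_ite_eq, if_pos (Finset.mem_univ i), Finset.sum_mul]

theorem Lap_mul_Qmat_apply {W : Matrix (Fin n) (Fin n) ℝ} (hW0 : ∀ i j, 0 ≤ W i j)
    (hWd : ∀ i, W i i = 0) (k : ℕ) (i j : Fin n) :
    (Lap W * Qmat W k) i j =
      sigma W (k + 1) * (1 : Matrix (Fin n) (Fin n) ℝ) i j - Qmat W (k + 1) i j := by
  classical
  rw [Lap_mul_apply hWd]
  simp only [Qmat_eq hW0, sigma_eq hW0]
  have e1 : ∑ m, W m i * ∑ F, (if IsForest F ∧ F.card = k ∧ inTreeOf F i j then wt W F else 0) =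
      ∑ A, if ∃ m F, First i j k A m F then wt W A else 0 :=
    sum_add_arc (fun m => (m, i)) (fun m => W m i) (fun _ => rfl)
      (fun _ F => IsForest F ∧ F.card = k ∧ inTreeOf F i j)
      (fun A => ∃ m F, First i j k A m F) (fun _ => Iff.rfl)
      (fun m F h hm => h.2.2.1 _ hm rfl)
      (fun _ _ _ _ _ => first_injective)
  have e2 : ∑ m, W i m * ∑ F, (if IsForest F ∧ F.card = k ∧ inTreeOf F m j then wt W F else 0) =
      ∑ A, if ∃ m F, Second i j k A m F then wt W A else 0 :=
    sum_add_arc (fun m => (i, m)) (fun m => W i m) (fun _ => rfl)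
      (fun m F => IsForest F ∧ F.card = k ∧ inTreeOf F m j)
      (fun A => ∃ m F, Second i j k A m F) (fun _ => Iff.rfl)
      (fun m F h hm => h.2.2.1 _ hm rfl)
      (fun _ _ _ _ _ => second_injective)
  rw [e1, e2, Finset.sum_mul, ← Finset.sum_sub_distrib, ← Finset.sum_sub_distrib]
  refine Finset.sum_congr rfl fun A _ => ?_
  by_cases hk : A.card = k + 1
  · by_cases hA : IsForest A
    · simp only [first_iff_of_forest hA hk, second_iff_of_forest hA hk, hA, hk, inTreeOf,
        true_and, if_true, Matrix.one_apply]
      have hrefl : i = j → FReach A i j := fun h => h ▸ .refl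
      split_ifs <;> first | (exfalso; tauto) | simp
    · have : (∃ m F, First i j k A m F) ↔ ∃ m F, Second i j k A m F :=
        ⟨fun ⟨_, _, h⟩ => second_of_first hA h, fun ⟨_, _, h⟩ => first_of_second hA h⟩
      simp [this, hA]
  · have h1 : ¬ ∃ m F, First i j k A m F := fun ⟨_, _, h⟩ => hk h.card
    have h2 : ¬ ∃ m F, Second i j k A m F := fun ⟨_, _, h⟩ => hk h.card
    simp [h1, h2, hk]

open scoped Classical in
/-- The non-roots of a forest correspond to its arcs. -/
theorem card_roots {F : Finset (Fin n × Fin n)} (hF : InDegLeOne F) :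
    ((Finset.univ.filter fun i => ∀ e ∈ F, e.2 ≠ i).card : ℝ) = n - F.card := by
  have h1 : (Finset.univ.filter fun i => ∀ e ∈ F, e.2 ≠ i) = (F.image Prod.snd)ᶜ := by
    ext i
    simp only [Finset.mem_filter, Finset.mem_univ, true_and, Finset.mem_compl, Finset.mem_image,
      not_exists, not_and]
  have h2 : (F.image Prod.snd).card = F.card := by
    refine Finset.card_image_of_injOn ?_
    rintro ⟨a, v⟩ h ⟨b, v'⟩ h' (rfl : v = v')
    rw [hF a b v h h']
  have h3 := Finset.card_add_card_compl (F.image Prod.snd)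
  rw [h1, ← h2, eq_sub_iff_add_eq, add_comm]
  exact_mod_cast h3.trans (Fintype.card_fin n)

theorem trace_Qmat {W : Matrix (Fin n) (Fin n) ℝ} (hW0 : ∀ i j, 0 ≤ W i j) (k : ℕ) :
    (Qmat W k).trace = (n - k) * sigma W k := by
  classical
  simp only [Matrix.trace, Matrix.diag_apply, Qmat_eq hW0, sigma_eq hW0]
  rw [Finset.sum_comm, Finset.mul_sum]
  refine Finset.sum_congr rfl fun F _ => ?_
  by_cases h : IsForest F ∧ F.card = k
  · have hs : ∀ i, FReach F i i := fun i => .refl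
    simp only [h.1, h.2, inTreeOf, hs, true_and, and_true, if_true]
    rw [← Finset.sum_filter, Finset.sum_const, nsmul_eq_mul, card_roots h.1.1, h.2]
  · have hs : ∀ i, ¬ (IsForest F ∧ F.card = k ∧ inTreeOf F i i) :=
      fun i hi => h ⟨hi.1, hi.2.1⟩
    simp [h, hs]

/-- For every `k = 0, 1, 2, …`, the forest matrices satisfy
`Q_{k+1} = σ_{k+1} I − L Q_k` with `σ_{k+1} = tr(L Q_k)/(k+1)`; consequently
`Q_{k+1} = (tr(L Q_k)/(k+1)) I − L Q_k`. -/
theorem forest_matrix_recurrence (n : ℕ) (hn : 1 < n)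
    (W : Matrix (Fin n) (Fin n) ℝ)
    (hW0 : ∀ i j, 0 ≤ W i j) (hWd : ∀ i, W i i = 0) (k : ℕ) :
    sigma W (k + 1) = (Lap W * Qmat W k).trace / (k + 1) ∧
    Qmat W (k + 1) = sigma W (k + 1) • (1 : Matrix (Fin n) (Fin n) ℝ) - Lap W * Qmat W k ∧
    Qmat W (k + 1)
      = ((Lap W * Qmat W k).trace / (k + 1)) • (1 : Matrix (Fin n) (Fin n) ℝ)
        - Lap W * Qmat W k := by
  have hL : Lap W * Qmat W k =
      sigma W (k + 1) • (1 : Matrix (Fin n) (Fin n) ℝ) - Qmat W (k + 1) := by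
    ext i j
    rw [Lap_mul_Qmat_apply hW0 hWd, Matrix.sub_apply, Matrix.smul_apply, smul_eq_mul]
  have hs : sigma W (k + 1) = (Lap W * Qmat W k).trace / (k + 1) := by
    rw [hL, Matrix.trace_sub, Matrix.trace_smul, Matrix.trace_one, trace_Qmat hW0,
      Fintype.card_fin, smul_eq_mul, eq_div_iff (by positivity)]
    push_cast
    ring
  have hQ : Qmat W (k + 1) =
      sigma W (k + 1) • (1 : Matrix (Fin n) (Fin n) ℝ) - Lap W * Qmat W k := by
    rw [hL, sub_sub_cancel]
  exact ⟨hs, hQ, hs ▸ hQ⟩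

end ForestMatrix
end

section
/- For every τ > 0: Q(τ) = adj(I + τL) and σ(τ) = det(I + τL); in particular σ(τ) > 0, the matrix I + τL is invertible, and J(τ) = (I + τL)^{−1} (the parametric matrix-forest theorem). -/
/-!
The proof expands determinants by multilinearity over all "parent maps" `p : Fin n → Option (Fin n)`,
where `p v = some u` stands for choosing the arc `(u, v)` and `p v = none` for making `v` a root.
Column `v` of `I + τL` equals `e_v + ∑ k, τ w_kv (e_v - e_k)`, so

  `det (I + τL) = ∑ p, c(p) det (B_p)`,  `adj (I + τL) i j = ∑ (p with p i = none), c(p) adj (B_p) i j`,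

where `c(p)` is the product of the chosen weights `τ w_uv` and column `v` of `B_p` is `e_v` or
`e_v - e_u` according to `p v`. (The code works with the transposes, because the determinant is
bundled as a multilinear function of the rows.) Two facts about `B_p` finish the argument.

* `det B_p` is `1` if `p` has no directed cycle and `0` otherwise (`det_parentMatrix`). In the acyclic
  case only the identity permutation contributes to the Leibniz formula; in the cyclic case the
  indicator of the set of vertices reachable from a cycle vertex is a nonzero left null vector.
* If `i` is a root of `p`, the indicator `z` of the set of vertices reachable from `i` satisfies
  `z B_p = e_i`, whence `adj (B_p) i j = det (B_p) z_j` (`adjugate_parentMatrix`).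

Finally, out-forests correspond bijectively to the acyclic parent maps that use only arcs of positive
weight (`sum_outForest_eq_sum_parent`); the other acyclic parent maps have `c(p) = 0`. The statements
on `J(τ)` follow from `σ(τ) > 0`, the forest without arcs contributing `1`.
-/


open Matrix Finset

namespace ForestMatrix

variable {n : ℕ}

/-! ### Parent maps and the matrices `B_p` -/

/-- The arc set of the parent map `p`: `p v = some u` means that `(u, v)` is the arc entering `v`,
and `p v = none` that `v` is a root. -/
def arcsOf (p : Fin n → Option (Fin n)) : Finset (Fin n × Fin n) :=
  Finset.univ.filter (fun e => p e.2 = some e.1)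

lemma mem_arcsOf (p : Fin n → Option (Fin n)) (a b : Fin n) :
    (a, b) ∈ arcsOf p ↔ p b = some a := by
  simp [arcsOf]

/-- A set of arcs contains no directed cycle. -/
def Acyc (F : Finset (Fin n × Fin n)) : Prop :=
  ∀ v : Fin n, ¬ Relation.TransGen (fun a b => (a, b) ∈ F) v v

/-- The vector `e_v` (for a root) or `e_v - e_u` (for a vertex with parent `u`). -/
def parentRow (v : Fin n) : Option (Fin n) → Fin n → ℝ
  | none => Pi.single v 1
  | some u => Pi.single v 1 - Pi.single u 1

/-- The transpose of `B_p`: its row `v` is `e_v` or `e_v - e_u` according to `p v`. -/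
def parentMatrix (p : Fin n → Option (Fin n)) : Matrix (Fin n) (Fin n) ℝ :=
  Matrix.of fun v => parentRow v (p v)

lemma parentMatrix_mulVec (p : Fin n → Option (Fin n)) (z : Fin n → ℝ) (v : Fin n) :
    (parentMatrix p *ᵥ z) v = z v - (p v).elim 0 z := by
  rcases h : p v with _ | u
  · simp [parentMatrix, Matrix.mulVec, parentRow, h]
  · change (parentRow v (p v)) ⬝ᵥ z = _
    simp [parentRow, h, sub_dotProduct]

lemma det_parentMatrix_of_acyc (p : Fin n → Option (Fin n)) (hp : Acyc (arcsOf p)) :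
    (parentMatrix p).det = 1 := by
  have hloop : ∀ v, p v ≠ some v := fun v h =>
    hp v (Relation.TransGen.single ((mem_arcsOf p v v).2 h))
  have hdiag : ∀ v, parentMatrix p v v = 1 := by
    intro v
    rcases h : p v with _ | u
    · simp [parentMatrix, parentRow, h]
    · have : v ≠ u := fun e => hloop v (by rw [h, e])
      simp [parentMatrix, parentRow, h, this]
  rw [← Matrix.det_transpose, Matrix.det_apply, Finset.sum_eq_single 1]
  · simp [hdiag]
  · intro s _ hs
    -- Otherwise `s` moves every vertex it does not fix to its parent, so an orbit of `s` is a cycle.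
    by_contra hne
    have hprod : ∀ v, parentMatrix p v (s v) ≠ 0 := by
      intro v hv
      apply hne
      rw [Finset.prod_eq_zero (Finset.mem_univ v) (by simpa using hv), smul_zero]
    have hpar : ∀ v, s v ≠ v → p v = some (s v) := by
      intro v hv
      have := hprod v
      rcases h : p v with _ | u
      · simp [parentMatrix, parentRow, h, hv] at this
      · by_contra hu
        have : s v ≠ u := fun e => hu (by rw [e])
        simp_all [parentMatrix, parentRow]
    obtain ⟨v, hv⟩ : ∃ v, s v ≠ v := by
      by_contra! h
      exact hs (Equiv.ext h)
    have hmove : ∀ k : ℕ, s ((s ^ k) v) ≠ (s ^ k) v := by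
      intro k h
      apply hv
      apply (s ^ k).injective
      rw [← Equiv.Perm.mul_apply, ← pow_succ, pow_succ', Equiv.Perm.mul_apply, h]
    have hwalk : ∀ k : ℕ,
        Relation.TransGen (fun a b => (a, b) ∈ arcsOf p) ((s ^ (k + 1)) v) v := by
      intro k
      induction k with
      | zero => exact .single ((mem_arcsOf _ _ _).2 (by simpa using hpar v hv))
      | succ k ih =>
        refine .head ((mem_arcsOf _ _ _).2 ?_) ih
        rw [hpar _ (hmove (k + 1)), pow_succ' s (k + 1), Equiv.Perm.mul_apply]
    have h0 := orderOf_pos s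
    have h1 := hwalk (orderOf s - 1)
    rw [Nat.sub_add_cancel h0, pow_orderOf_eq_one] at h1
    exact hp v h1
  · simp

/-- A non-root vertex is reachable from `c ≠ v` exactly when its parent is. -/
lemma freach_parent_iff (p : Fin n → Option (Fin n)) {c u v : Fin n} (h : p v = some u)
    (hcv : c ≠ v) : FReach (arcsOf p) c v ↔ FReach (arcsOf p) c u := by
  refine ⟨fun hr => ?_, fun hr => hr.tail ((mem_arcsOf _ _ _).2 h)⟩
  rcases Relation.ReflTransGen.cases_tail hr with e | ⟨w, hw, hwv⟩
  · exact absurd e.symm hcv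
  · rw [mem_arcsOf, h, Option.some.injEq] at hwv
    rwa [hwv]

/-- A root is reachable only from itself. -/
lemma freach_root_iff (p : Fin n → Option (Fin n)) {c v : Fin n} (h : p v = none) :
    FReach (arcsOf p) c v ↔ c = v := by
  refine ⟨fun hr => ?_, fun e => e ▸ Relation.ReflTransGen.refl⟩
  rcases Relation.ReflTransGen.cases_tail hr with e | ⟨w, hw, hwv⟩
  · exact e.symm
  · rw [mem_arcsOf, h] at hwv
    cases hwv

open scoped Classical in
lemma det_parentMatrix (p : Fin n → Option (Fin n)) :
    (parentMatrix p).det = if Acyc (arcsOf p) then 1 else 0 := by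
  split_ifs with hp
  · exact det_parentMatrix_of_acyc p hp
  · obtain ⟨c, hc⟩ : ∃ c, Relation.TransGen (fun a b => (a, b) ∈ arcsOf p) c c := by
      simpa [Acyc] using hp
    -- The parent of the cycle vertex `c` is itself reachable from `c`.
    obtain ⟨w, hcw, hwc⟩ := Relation.TransGen.tail'_iff.1 hc
    rw [mem_arcsOf] at hwc
    refine Matrix.exists_mulVec_eq_zero_iff.1
      ⟨fun v => if FReach (arcsOf p) c v then 1 else 0, fun h => ?_, ?_⟩
    · have := congrFun h c
      rw [if_pos (show FReach (arcsOf p) c c from Relation.ReflTransGen.refl)] at this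
      simp at this
    · ext v
      rw [parentMatrix_mulVec]
      rcases h : p v with _ | u
      · have : c ≠ v := by rintro rfl; simp [h] at hwc
        simp [freach_root_iff p h, this]
      · by_cases hcv : c = v
        · subst hcv
          obtain rfl : u = w := by simpa [h] using hwc
          have h1 : FReach (arcsOf p) c u := hcw
          have h2 : FReach (arcsOf p) c c := Relation.ReflTransGen.refl
          simp [h1, h2]
        · simp [freach_parent_iff p h hcv]

open scoped Classical in
/-- For a root `i`, the row `i` of `adj B_p` is `det B_p` times the indicator of the tree diverging
from `i`. This holds whether or not `p` has cycles. -/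
lemma adjugate_parentMatrix (p : Fin n → Option (Fin n)) (i j : Fin n) (hi : p i = none) :
    (parentMatrix p).adjugate j i =
      (parentMatrix p).det * if FReach (arcsOf p) i j then 1 else 0 := by
  set z : Fin n → ℝ := fun v => if FReach (arcsOf p) i v then 1 else 0 with hz
  have hBz : parentMatrix p *ᵥ z = Pi.single i 1 := by
    ext v
    rw [parentMatrix_mulVec]
    rcases h : p v with _ | u
    · simp [hz, freach_root_iff p h, Pi.single_apply, eq_comm]
    · have : i ≠ v := by rintro rfl; simp [h] at hi
      simp [hz, freach_parent_iff p h this, this.symm]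
  have h2 : (parentMatrix p).adjugate *ᵥ (parentMatrix p *ᵥ z) = (parentMatrix p).det • z := by
    rw [Matrix.mulVec_mulVec, Matrix.adjugate_mul, Matrix.smul_mulVec, Matrix.one_mulVec]
  rw [hBz] at h2
  simpa [hz] using congrFun h2 j

/-! ### Multilinear expansion of the determinant and the adjugate -/

lemma det_sum_rows {α : Type*} [Fintype α] (c : Fin n → α → ℝ) (b : Fin n → α → Fin n → ℝ) :
    (Matrix.of fun v => ∑ o, c v o • b v o).det =
      ∑ p : Fin n → α, (∏ v, c v (p v)) * (Matrix.of fun v => b v (p v)).det := by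
  classical
  have h := (Matrix.detRowAlternating (n := Fin n) (R := ℝ)).toMultilinearMap.map_sum
    (fun v o => c v o • b v o)
  refine h.trans (Finset.sum_congr rfl fun p _ => ?_)
  exact (Matrix.detRowAlternating (n := Fin n) (R := ℝ)).toMultilinearMap.map_smul_univ
    (fun v => c v (p v)) (fun v => b v (p v))

/-- The factor contributed by a vertex `v`: `1` for a root, `τ w_uv` for a vertex with parent `u`. -/
def coef (W : Matrix (Fin n) (Fin n) ℝ) (τ : ℝ) (v : Fin n) : Option (Fin n) → ℝ
  | none => 1
  | some u => τ * W u v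

lemma transpose_eq_sum_rows (W : Matrix (Fin n) (Fin n) ℝ) (hWd : ∀ i, W i i = 0) (τ : ℝ) :
    (1 + τ • Lap W)ᵀ = Matrix.of fun v => ∑ o, coef W τ v o • parentRow v o := by
  ext v x
  simp only [Matrix.transpose_apply, Matrix.add_apply, Matrix.smul_apply, Matrix.of_apply,
    Fintype.sum_option, coef, parentRow, Finset.sum_apply, Pi.add_apply, Pi.smul_apply,
    Pi.sub_apply, smul_eq_mul, one_mul, mul_sub, Finset.sum_sub_distrib, Lap, Matrix.one_apply,
    Pi.single_apply]
  by_cases h : x = v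
  · subst h
    have : ∑ k ∈ Finset.univ.erase x, W k x = ∑ k, W k x :=
      Finset.sum_erase _ (hWd x)
    simp [this, Finset.mul_sum, hWd]
  · simp [h]

lemma det_eq_sum_parent (W : Matrix (Fin n) (Fin n) ℝ) (hWd : ∀ i, W i i = 0) (τ : ℝ) :
    (1 + τ • Lap W).det =
      ∑ p : Fin n → Option (Fin n), (∏ v, coef W τ v (p v)) * (parentMatrix p).det := by
  rw [← Matrix.det_transpose, transpose_eq_sum_rows W hWd, det_sum_rows]
  rfl

lemma adjugate_eq_sum_parent (W : Matrix (Fin n) (Fin n) ℝ) (hWd : ∀ i, W i i = 0) (τ : ℝ)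
    (i j : Fin n) :
    (1 + τ • Lap W).adjugate i j =
      ∑ p : Fin n → Option (Fin n), (∏ v, coef W τ v (p v)) *
        if p i = none then (parentMatrix p).adjugate j i else 0 := by
  -- The replaced row `i` is written as a sum over `Option (Fin n)` with `none` as the only term.
  have hrow : (1 + τ • Lap W)ᵀ.updateRow i (Pi.single j 1) = Matrix.of fun v => ∑ o,
      (if v = i then (if o = none then (1 : ℝ) else 0) else coef W τ v o) •
        (if v = i then Pi.single j 1 else parentRow v o) := by
    rw [transpose_eq_sum_rows W hWd]
    ext v x
    by_cases h : v = i
    · subst h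
      simp
    · simp [h, Matrix.updateRow_ne]
  rw [← Matrix.transpose_apply (Matrix.adjugate _) j i, Matrix.adjugate_transpose,
    Matrix.adjugate_apply, hrow, det_sum_rows]
  refine Finset.sum_congr rfl fun p _ => ?_
  by_cases hp : p i = none
  · rw [if_pos hp, Matrix.adjugate_apply]
    congr 1
    · refine Finset.prod_congr rfl fun v _ => ?_
      by_cases h : v = i
      · subst h
        simp [hp, coef]
      · simp [h]
    · congr 1
      ext v x
      by_cases h : v = i
      · subst h
        simp
      · simp [h, Matrix.updateRow_ne, parentMatrix]
  · rw [if_neg hp, mul_zero, Finset.prod_eq_zero (Finset.mem_univ i) (by simp [hp]), zero_mul]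

/-! ### Out-forests and acyclic parent maps -/

lemma prod_coef (W : Matrix (Fin n) (Fin n) ℝ) (τ : ℝ) (p : Fin n → Option (Fin n)) :
    ∏ v, coef W τ v (p v) = wt W (arcsOf p) * τ ^ (arcsOf p).card := by
  rw [wt, mul_comm, ← Finset.prod_const, ← Finset.prod_mul_distrib, arcsOf, Finset.prod_filter,
    ← Finset.univ_product_univ, Finset.prod_product_right]
  refine Finset.prod_congr rfl fun v _ => ?_
  rcases h : p v with _ | u
  · simp [coef, h]
  · simp [coef, h]

lemma arcsOf_injective : Function.Injective (arcsOf (n := n)) := by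
  intro p q h
  funext v
  refine Option.ext fun u => ?_
  rw [← mem_arcsOf, ← mem_arcsOf, h]

lemma indegree_arcsOf (p : Fin n → Option (Fin n)) (v : Fin n) :
    ({e ∈ arcsOf p | e.2 = v} : Finset (Fin n × Fin n)).card ≤ 1 := by
  rw [Finset.card_le_one]
  rintro ⟨a, b⟩ h1 ⟨c, d⟩ h2
  simp only [Finset.mem_filter, mem_arcsOf] at h1 h2
  obtain ⟨h1, rfl⟩ := h1
  obtain ⟨h2, rfl⟩ := h2
  simpa [h1] using h2

lemma exists_arcsOf_eq (F : Finset (Fin n × Fin n))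
    (hF : ∀ v : Fin n, ({e ∈ F | e.2 = v} : Finset (Fin n × Fin n)).card ≤ 1) :
    ∃ p, arcsOf p = F := by
  classical
  refine ⟨fun v => if h : ∃ u, (u, v) ∈ F then some h.choose else none, ?_⟩
  ext ⟨a, b⟩
  rw [mem_arcsOf]
  by_cases h : ∃ u, (u, b) ∈ F
  · rw [dif_pos h, Option.some.injEq]
    refine ⟨fun e => e ▸ h.choose_spec, fun hab => ?_⟩
    have := Finset.card_le_one.1 (hF b) (h.choose, b) (by simp [h.choose_spec]) (a, b)
      (by simp [hab])
    exact congrArg Prod.fst this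
  · rw [dif_neg h]
    simpa using fun hab => h ⟨a, hab⟩

open scoped Classical in
lemma sum_outForest_eq_sum_parent (W : Matrix (Fin n) (Fin n) ℝ) (hW0 : ∀ i j, 0 ≤ W i j)
    (τ : ℝ) (P : Finset (Fin n × Fin n) → Prop) :
    ∑ F ∈ (allOutForests W).filter P, wt W F * τ ^ F.card =
      ∑ p : Fin n → Option (Fin n), (∏ v, coef W τ v (p v)) *
        if Acyc (arcsOf p) ∧ P (arcsOf p) then 1 else 0 := by
  simp only [mul_ite, mul_one, mul_zero, prod_coef]
  rw [← Finset.sum_filter]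
  symm
  -- Acyclic parent maps which use a pair of weight `0` contribute nothing.
  have hsub : Finset.univ.filter (fun p => arcsOf p ∈ (allOutForests W).filter P) ⊆
      Finset.univ.filter (fun p : Fin n → Option (Fin n) =>
        Acyc (arcsOf p) ∧ P (arcsOf p)) := by
    intro p hp
    simp only [allOutForests, Finset.mem_filter, Finset.mem_univ, true_and] at hp ⊢
    exact ⟨hp.1.2.2, hp.2⟩
  rw [← Finset.sum_subset hsub]
  · refine Finset.sum_bij (fun p _ => arcsOf p) (fun p hp => (Finset.mem_filter.1 hp).2)
      (fun p _ q _ h => arcsOf_injective h) (fun F hF => ?_) (fun _ _ => rfl)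
    obtain ⟨p, rfl⟩ := exists_arcsOf_eq F
      (Finset.mem_filter.1 (Finset.mem_filter.1 hF).1).2.2.1
    exact ⟨p, by simpa using hF, rfl⟩
  · intro p hp hp'
    simp only [allOutForests, Finset.mem_filter, Finset.mem_univ, true_and] at hp hp'
    have : ∃ e ∈ arcsOf p, ¬ 0 < W e.1 e.2 := by
      by_contra! h
      exact hp' ⟨⟨h, indegree_arcsOf p, hp.1⟩, hp.2⟩
    obtain ⟨e, he, hWe⟩ := this
    rw [wt, Finset.prod_eq_zero he (le_antisymm (not_lt.1 hWe) (hW0 _ _)), zero_mul]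

open scoped Classical in
/-- Summing over the number of arcs up to the maximum means summing over all out-forests. -/
lemma sum_range_outForests (W : Matrix (Fin n) (Fin n) ℝ) (τ : ℝ)
    (P : Finset (Fin n × Fin n) → Prop) :
    ∑ k ∈ Finset.range (maxArcs W + 1), wtSet W ((outForests W k).filter P) * τ ^ k =
      ∑ F ∈ (allOutForests W).filter P, wt W F * τ ^ F.card := by
  rw [← Finset.sum_fiberwise_of_maps_to (t := Finset.range (maxArcs W + 1)) (g := Finset.card)]
  · refine Finset.sum_congr rfl fun k _ => ?_
    rw [wtSet, Finset.sum_mul]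
    refine Finset.sum_congr ?_ ?_
    · ext F
      simp only [outForests, allOutForests, Finset.mem_filter, Finset.mem_univ, true_and]
      tauto
    · intro F hF
      rw [(Finset.mem_filter.1 hF).2]
  · intro F hF
    rw [Finset.mem_range, Nat.lt_succ_iff]
    exact Finset.le_sup (f := Finset.card) (Finset.mem_filter.1 hF).1

lemma sigmaTau_eq_sum (W : Matrix (Fin n) (Fin n) ℝ) (τ : ℝ) :
    sigmaTau W τ = ∑ F ∈ allOutForests W, wt W F * τ ^ F.card := by
  simpa only [Finset.filter_true, sigmaTau, sigma] using sum_range_outForests W τ (fun _ => True)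

lemma sigmaTau_eq_det (W : Matrix (Fin n) (Fin n) ℝ) (hW0 : ∀ i j, 0 ≤ W i j)
    (hWd : ∀ i, W i i = 0) (τ : ℝ) : sigmaTau W τ = (1 + τ • Lap W).det := by
  have h := sum_outForest_eq_sum_parent W hW0 τ (fun _ => True)
  simp only [Finset.filter_true] at h
  rw [sigmaTau_eq_sum, h, det_eq_sum_parent W hWd]
  refine Finset.sum_congr rfl fun p _ => ?_
  rw [det_parentMatrix]
  by_cases hp : Acyc (arcsOf p)
  · rw [if_pos ⟨hp, trivial⟩, if_pos hp]
  · rw [if_neg fun h => hp h.1, if_neg hp]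

lemma sigmaTau_pos (W : Matrix (Fin n) (Fin n) ℝ) (hW0 : ∀ i j, 0 ≤ W i j) (τ : ℝ)
    (hτ : 0 < τ) : 0 < sigmaTau W τ := by
  classical
  rw [sigmaTau_eq_sum]
  refine Finset.sum_pos' (fun F _ => mul_nonneg (Finset.prod_nonneg fun e _ => hW0 _ _)
    (pow_nonneg hτ.le _)) ⟨∅, Finset.mem_filter.2 ⟨Finset.mem_univ _, ?_⟩, by simp [wt]⟩
  refine ⟨by simp, by simp, fun v hv => ?_⟩
  obtain ⟨w, _, hw⟩ := Relation.TransGen.tail'_iff.1 hv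
  simp at hw

lemma QTau_eq_adjugate (W : Matrix (Fin n) (Fin n) ℝ) (hW0 : ∀ i j, 0 ≤ W i j)
    (hWd : ∀ i, W i i = 0) (τ : ℝ) : QTau W τ = (1 + τ • Lap W).adjugate := by
  classical
  ext i j
  have hQ : QTau W τ i j = ∑ k ∈ Finset.range (maxArcs W + 1),
      wtSet W ((outForests W k).filter fun F => inTreeOf F i j) * τ ^ k := by
    rw [QTau, Matrix.sum_apply]
    refine Finset.sum_congr rfl fun k _ => ?_
    rw [Matrix.smul_apply, smul_eq_mul, mul_comm, Qmat]
  rw [hQ, sum_range_outForests, sum_outForest_eq_sum_parent W hW0, adjugate_eq_sum_parent W hWd]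
  refine Finset.sum_congr rfl fun p _ => ?_
  have hroot : (∀ e ∈ arcsOf p, e.2 ≠ i) ↔ p i = none := by
    rw [Option.eq_none_iff_forall_ne_some]
    refine ⟨fun h u hu => h (u, i) ((mem_arcsOf _ _ _).2 hu) rfl, ?_⟩
    rintro h ⟨a, b⟩ he rfl
    exact h a ((mem_arcsOf _ _ _).1 he)
  congr 1
  by_cases hp : p i = none
  · rw [if_pos hp, adjugate_parentMatrix p i j hp, det_parentMatrix]
    simp only [inTreeOf, hroot, hp, true_and, ite_and, ite_mul, one_mul, zero_mul]
  · rw [if_neg hp, if_neg]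
    exact fun h => hp (hroot.1 h.2.1)

/-- parametric matrix-forest theorem. For every `τ > 0`:
`Q(τ) = adj(I + τL)`, `σ(τ) = det(I + τL)`; in particular `σ(τ) > 0`, the matrix
`I + τL` is invertible, and `J(τ) = (I + τL)⁻¹`. -/
theorem matrix_forest_theorem (n : ℕ) (hn : 1 < n)
    (W : Matrix (Fin n) (Fin n) ℝ)
    (hW0 : ∀ i j, 0 ≤ W i j) (hWd : ∀ i, W i i = 0)
    (τ : ℝ) (hτ : 0 < τ) :
    QTau W τ = (1 + τ • Lap W).adjugate ∧
    sigmaTau W τ = (1 + τ • Lap W).det ∧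
    0 < sigmaTau W τ ∧
    IsUnit (1 + τ • Lap W) ∧
    JTau W τ = (1 + τ • Lap W)⁻¹ := by
  have hQ := QTau_eq_adjugate W hW0 hWd τ
  have hdet := sigmaTau_eq_det W hW0 hWd τ
  have hpos := sigmaTau_pos W hW0 τ hτ
  have hunit : IsUnit (1 + τ • Lap W).det := by
    rw [← hdet]
    exact hpos.ne'.isUnit
  refine ⟨hQ, hdet, hpos, (Matrix.isUnit_iff_isUnit_det _).2 hunit, ?_⟩
  rw [JTau, hQ, hdet, Matrix.inv_def, Ring.inverse_eq_inv']

end ForestMatrix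
end

section
/- For each k = 0, …, n−d' one has σ_k > 0, and the matrices J_k = σ_k^{−1} Q_k (k = 0, …, n−d'), J = σ^{−1} Q, and J(τ) for every τ > 0 are column stochastic: all their entries are nonnegative and every column sums to 1. -/
/-!
Column stochasticity reduces to the identity `∑ i, (Q_k)_{ij} = σ_k` together with `σ_k > 0`.

The identity (`sum_Qmat_col`) is double counting: in a diverging forest `F` every vertex `j` lies
in exactly one tree, so it has exactly one root above it (`existsUnique_root`) and `F` contributes
its weight to exactly one entry of column `j`. A root exists because ancestry in a finite acyclic
digraph is well-founded; it is unique because indegrees at most one make any two ancestors of `j`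
comparable, while a root has no proper ancestor.

Positivity (`sigma_pos`) holds because every forest has positive weight and discarding arcs from a
maximum out-forest yields out-forests with every smaller number of arcs.

Both facts pass to positive linear combinations of the `Q_k`, and normalizing a nonnegative matrix
whose columns all have the same positive sum gives a stochastic matrix.
-/

open Matrix Finset

namespace ForestMatrix

variable {n : ℕ}

theorem IsOutForest.subset {W : Matrix (Fin n) (Fin n) ℝ} {F G : Finset (Fin n × Fin n)}
    (hF : IsOutForest W F) (h : G ⊆ F) : IsOutForest W G := by
  refine ⟨fun e he => hF.1 e (h he), fun v => ?_, fun v hv => ?_⟩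
  · exact (Finset.card_le_card (Finset.filter_subset_filter _ h)).trans (hF.2.1 v)
  · exact hF.2.2 v (Relation.TransGen.mono (fun a b hab => h hab) v v hv)

theorem IsOutForest.wt_pos {W : Matrix (Fin n) (Fin n) ℝ} {F : Finset (Fin n × Fin n)}
    (hF : IsOutForest W F) : 0 < wt W F :=
  Finset.prod_pos hF.1

theorem isOutForest_empty (W : Matrix (Fin n) (Fin n) ℝ) : IsOutForest W ∅ := by
  refine ⟨by simp, by simp, fun v hv => ?_⟩
  obtain ⟨_, h, _⟩ := Relation.TransGen.head'_iff.1 hv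
  simp at h

theorem exists_card_eq_maxArcs (W : Matrix (Fin n) (Fin n) ℝ) :
    ∃ F, IsOutForest W F ∧ F.card = maxArcs W := by
  have hne : (allOutForests W).Nonempty := ⟨∅, by simp [allOutForests, isOutForest_empty]⟩
  obtain ⟨F, hF, h⟩ := Finset.exists_mem_eq_sup _ hne Finset.card
  exact ⟨F, by simpa [allOutForests] using hF, h.symm⟩

theorem sigma_pos (W : Matrix (Fin n) (Fin n) ℝ) {k : ℕ} (hk : k ≤ maxArcs W) :
    0 < sigma W k := by
  obtain ⟨F, hF, hc⟩ := exists_card_eq_maxArcs W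
  obtain ⟨G, hG, hGc⟩ := Finset.exists_subset_card_eq (hk.trans_eq hc.symm)
  refine Finset.sum_pos (fun H hH => ?_) ⟨G, ?_⟩
  · simp only [outForests, Finset.mem_filter] at hH
    exact hH.2.1.wt_pos
  · simp [outForests, hF.subset hG, hGc]

theorem IsOutForest.exists_root {W : Matrix (Fin n) (Fin n) ℝ} {F : Finset (Fin n × Fin n)}
    (hF : IsOutForest W F) (j : Fin n) : ∃ i, inTreeOf F i j := by
  let r : Fin n → Fin n → Prop := Relation.TransGen (fun a b => (a, b) ∈ F)
  have : IsTrans (Fin n) r := ⟨fun _ _ _ => Relation.TransGen.trans⟩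
  have : Std.Irrefl r := ⟨hF.2.2⟩
  have wf : WellFounded r := Finite.wellFounded_of_trans_of_irrefl r
  induction j using wf.induction with
  | _ j ih =>
    by_cases hj : ∀ e ∈ F, e.2 ≠ j
    · exact ⟨j, hj, Relation.ReflTransGen.refl⟩
    · push Not at hj
      obtain ⟨⟨a, b⟩, he, rfl⟩ := hj
      obtain ⟨i, hi, hia⟩ := ih a (Relation.TransGen.single he)
      exact ⟨i, hi, Relation.ReflTransGen.tail hia he⟩

/-- Nothing other than the root itself reaches a root. -/
theorem FReach.eq_of_root {F : Finset (Fin n × Fin n)} {a i : Fin n}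
    (hi : ∀ e ∈ F, e.2 ≠ i) (h : FReach F a i) : a = i := by
  rcases Relation.ReflTransGen.cases_tail h with h | ⟨c, _, hc⟩
  · exact h.symm
  · exact absurd rfl (hi _ hc)

/-- Each vertex of a diverging forest belongs to exactly one of its trees. -/
theorem IsOutForest.existsUnique_root {W : Matrix (Fin n) (Fin n) ℝ}
    {F : Finset (Fin n × Fin n)} (hF : IsOutForest W F) (j : Fin n) :
    ∃! i, inTreeOf F i j := by
  obtain ⟨i, hi⟩ := hF.exists_root j
  refine ⟨i, hi, fun i' hi' => ?_⟩
  -- Read backwards, the arcs of `F` form a partial function: a vertex has at most one parent.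
  have hu : Relator.RightUnique (Function.swap fun a b => (a, b) ∈ F) := by
    intro c a b ha hb
    have := Finset.card_le_one.1 (hF.2.1 c) (a, c) (by simpa using ha) (b, c) (by simpa using hb)
    exact congrArg Prod.fst this
  rcases Relation.ReflTransGen.total_of_right_unique hu
    (Relation.reflTransGen_swap.2 hi.2) (Relation.reflTransGen_swap.2 hi'.2) with h | h
  · exact FReach.eq_of_root hi.1 (Relation.reflTransGen_swap.1 h)
  · exact (FReach.eq_of_root hi'.1 (Relation.reflTransGen_swap.1 h)).symm

theorem Qmat_nonneg (W : Matrix (Fin n) (Fin n) ℝ) (k : ℕ) (i j : Fin n) :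
    0 ≤ Qmat W k i j := by
  refine Finset.sum_nonneg fun F hF => ?_
  simp only [outForests, Finset.mem_filter] at hF
  exact hF.1.2.1.wt_pos.le

theorem sum_Qmat_col (W : Matrix (Fin n) (Fin n) ℝ) (k : ℕ) (j : Fin n) :
    ∑ i, Qmat W k i j = sigma W k := by
  classical
  simp only [Qmat, sigma, wtSet, Finset.sum_filter]
  rw [Finset.sum_comm]
  refine Finset.sum_congr rfl fun F hF => ?_
  simp only [outForests, Finset.mem_filter] at hF
  obtain ⟨i, hi, hu⟩ := hF.2.1.existsUnique_root j
  rw [Finset.sum_eq_single i (fun b _ hb => if_neg fun h => hb (hu b h)) (by simp)]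
  exact if_pos hi

theorem inv_smul_columnStochastic {M : Matrix (Fin n) (Fin n) ℝ} {s : ℝ} (hs : 0 < s)
    (hM : ∀ i j, 0 ≤ M i j) (hsum : ∀ j, ∑ i, M i j = s) :
    (∀ i j, 0 ≤ (s⁻¹ • M) i j) ∧ ∀ j, ∑ i, (s⁻¹ • M) i j = 1 := by
  refine ⟨fun i j => ?_, fun j => ?_⟩
  · exact mul_nonneg (inv_nonneg.2 hs.le) (hM i j)
  · simp only [Matrix.smul_apply, smul_eq_mul, ← Finset.mul_sum, hsum]
    exact inv_mul_cancel₀ hs.ne'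

theorem JTau_columnStochastic (W : Matrix (Fin n) (Fin n) ℝ) {τ : ℝ} (hτ : 0 < τ) :
    (∀ i j, 0 ≤ JTau W τ i j) ∧ ∀ j, ∑ i, JTau W τ i j = 1 := by
  refine inv_smul_columnStochastic ?_ (fun i j => ?_) fun j => ?_
  · refine Finset.sum_pos (fun k hk => ?_) ⟨0, by simp⟩
    exact mul_pos (sigma_pos W (Nat.lt_succ_iff.1 (Finset.mem_range.1 hk))) (pow_pos hτ k)
  · simp only [QTau, Matrix.sum_apply, Matrix.smul_apply, smul_eq_mul]
    exact Finset.sum_nonneg fun k _ => mul_nonneg (pow_pos hτ k).le (Qmat_nonneg W k i j)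
  · simp only [QTau, sigmaTau, Matrix.sum_apply, Matrix.smul_apply, smul_eq_mul]
    rw [Finset.sum_comm]
    simp only [← Finset.mul_sum, sum_Qmat_col, mul_comm (sigma W _)]

/-- For each `k = 0, …, n−d'` one has `σ_k > 0`, and the matrices
`J_k = σ_k⁻¹ Q_k` (`k = 0, …, n−d'`), `J = σ⁻¹ Q`, and `J(τ)` for every `τ > 0` are
column stochastic. Here `Q = Σ_{k=0}^{n−d'} Q_k` and `σ = Σ_{k=0}^{n−d'} σ_k`. -/
theorem forest_matrices_column_stochastic (n : ℕ) (hn : 1 < n)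
    (W : Matrix (Fin n) (Fin n) ℝ)
    (hW0 : ∀ i j, 0 ≤ W i j) (hWd : ∀ i, W i i = 0) :
    (∀ k ≤ maxArcs W, 0 < sigma W k) ∧
    (∀ k ≤ maxArcs W,
      (∀ i j, 0 ≤ ((sigma W k)⁻¹ • Qmat W k) i j) ∧
      (∀ j, ∑ i, ((sigma W k)⁻¹ • Qmat W k) i j = 1)) ∧
    ((∀ i j, 0 ≤
        ((∑ k ∈ Finset.range (maxArcs W + 1), sigma W k)⁻¹ •
          ∑ k ∈ Finset.range (maxArcs W + 1), Qmat W k) i j) ∧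
     (∀ j, ∑ i,
        ((∑ k ∈ Finset.range (maxArcs W + 1), sigma W k)⁻¹ •
          ∑ k ∈ Finset.range (maxArcs W + 1), Qmat W k) i j = 1)) ∧
    (∀ τ : ℝ, 0 < τ →
      (∀ i j, 0 ≤ JTau W τ i j) ∧ (∀ j, ∑ i, JTau W τ i j = 1)) := by
  refine ⟨fun k hk => sigma_pos W hk, fun k hk => ?_, ?_, fun τ hτ => JTau_columnStochastic W hτ⟩
  · exact inv_smul_columnStochastic (sigma_pos W hk) (Qmat_nonneg W k) (sum_Qmat_col W k)
  -- The matrix `σ⁻¹ Q` is `J(τ)` at `τ = 1`.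
  · simpa [JTau, QTau, sigmaTau] using JTau_columnStochastic W one_pos

end ForestMatrix
end
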